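/- For every N ≥ 1 and θ > (1 + log N)/(2 log γ), we have limsup_{k→∞} (1/k) log ∑_{n=k+1}^∞ C(n,k) γ^{-2θn} ≤ −2θ log γ + 1/N, where γ = (1+√5)/2. Consequently lim_{θ→∞} |P_D(θ) + 2θ log γ| = 0 for the Diophantine pressure P_D. -/

import Mathlib

open Filter

/-- The continued fraction denominator `q_k([a_1, ..., a_k])` (the continuant). -/
def cfDen : List ℕ → ℕ
  | [] => 1
  | [a] => a
  | a :: b :: t => a * cfDen (b :: t) + cfDen t

/-- The Diophantine pressure (with `limsup`):
`P_D(θ) = lim_k (1/k) log ∑_{[a_1,...,a_k]} q_k([a_1,...,a_k])^{-2θ}`. -/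
noncomputable def diophantinePressure (θ : ℝ) : ℝ :=
  limsup (fun k : ℕ =>
    Real.log (∑' l : {l : List ℕ // l.length = k ∧ ∀ a ∈ l, 1 ≤ a},
      (cfDen l.1 : ℝ) ^ (-2 * θ)) / k) atTop

/-- Exponential two-sided bounds give bounds for the `limsup` of `log S k / k`. -/
lemma limsup_log_bounds (S : ℕ → ℝ) (c1 c2 r1 r2 : ℝ) (hc1 : 0 < c1) (hc2 : 0 < c2)
    (hr1 : 0 < r1) (hr2 : 0 < r2) (h1 : ∀ k, c1 * r1 ^ k ≤ S k) (h2 : ∀ k, S k ≤ c2 * r2 ^ k) :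
    Real.log r1 ≤ limsup (fun k : ℕ => Real.log (S k) / k) atTop ∧
      limsup (fun k : ℕ => Real.log (S k) / k) atTop ≤ Real.log r2 := by
  have key : ∀ c r : ℝ, Tendsto (fun k : ℕ => Real.log c / (k : ℝ) + Real.log r) atTop
      (nhds (Real.log r)) := by
    intro c r
    have := (tendsto_const_div_atTop_nhds_zero_nat (Real.log c)).add_const (Real.log r)
    simpa using this
  have e : ∀ c r : ℝ, 0 < c → 0 < r → ∀ k : ℕ, 1 ≤ k →
      Real.log (c * r ^ k) / k = Real.log c / (k : ℝ) + Real.log r := by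
    intro c r hc hr k hk
    have hk' : (k : ℝ) ≠ 0 := by positivity
    rw [Real.log_mul hc.ne' (by positivity), Real.log_pow]
    field_simp
  have lo : ∀ᶠ k : ℕ in atTop, Real.log c1 / (k : ℝ) + Real.log r1 ≤ Real.log (S k) / k := by
    filter_upwards [eventually_ge_atTop 1] with k hk
    rw [← e c1 r1 hc1 hr1 k hk]
    have := h1 k
    gcongr
  have hi : ∀ᶠ k : ℕ in atTop, Real.log (S k) / k ≤ Real.log c2 / (k : ℝ) + Real.log r2 := by
    filter_upwards [eventually_ge_atTop 1] with k hk
    rw [← e c2 r2 hc2 hr2 k hk]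
    have h3 := h2 k
    have : 0 < S k := lt_of_lt_of_le (by positivity) (h1 k)
    gcongr
  have b1 : IsBoundedUnder (· ≥ ·) atTop (fun k : ℕ => Real.log (S k) / k) :=
    (key c1 r1).isBoundedUnder_ge.mono_ge lo
  have b2 : IsBoundedUnder (· ≤ ·) atTop (fun k : ℕ => Real.log (S k) / k) :=
    (key c2 r2).isBoundedUnder_le.mono_le hi
  constructor
  · rw [← (key c1 r1).limsup_eq]
    exact limsup_le_limsup lo (key c1 r1).isBoundedUnder_ge.isCoboundedUnder_le b2
  · rw [← (key c2 r2).limsup_eq]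
    exact limsup_le_limsup hi b1.isCoboundedUnder_le (key c2 r2).isBoundedUnder_le

lemma part_one (g : ℝ) (hg1 : 1 < g) (N : ℕ) (hN : 1 ≤ N) (θ : ℝ)
    (hθ : (1 + Real.log N) / (2 * Real.log g) < θ) :
    limsup (fun k : ℕ =>
          Real.log (∑' n : ℕ, (((n + k + 1).choose k : ℝ)) *
            g ^ (-2 * θ * ((n : ℝ) + k + 1))) / k) atTop ≤
        -2 * θ * Real.log g + 1 / N := by
  have hlg : 0 < Real.log g := Real.log_pos hg1
  have hg0 : 0 < g := by linarith
  have hN0 : (1 : ℝ) ≤ N := by exact_mod_cast hN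
  obtain ⟨x, hx⟩ : ∃ x : ℝ, x = g ^ (-2 * θ) := ⟨_, rfl⟩
  have hx0 : 0 < x := hx ▸ Real.rpow_pos_of_pos hg0 _
  have hlx : Real.log x = -2 * θ * Real.log g := by rw [hx, Real.log_rpow hg0]
  rw [div_lt_iff₀ (by positivity)] at hθ
  have hxN : x * (2 * N) ≤ 1 := by
    have h1 : Real.log x < -1 + -Real.log N := by rw [hlx]; linarith
    have h2 : x < Real.exp (-1) * (N : ℝ)⁻¹ := by
      rw [Real.log_lt_iff_lt_exp hx0, Real.exp_add, Real.exp_neg (Real.log N),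
        Real.exp_log (by linarith)] at h1
      exact h1
    have h3 : Real.exp (-1) * 2 ≤ 1 := by
      have := Real.add_one_le_exp (1 : ℝ)
      rw [Real.exp_neg, inv_mul_le_iff₀ (Real.exp_pos _)]
      linarith
    calc x * (2 * N) ≤ Real.exp (-1) * (N : ℝ)⁻¹ * (2 * N) := by gcongr
      _ = Real.exp (-1) * 2 := by field_simp
      _ ≤ 1 := h3
  have hx1 : x < 1 := by nlinarith
  have hy : 0 < 1 - x := by linarith
  have hS : ∀ k : ℕ, (∑' n : ℕ, (((n + k + 1).choose k : ℝ)) *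
            g ^ (-2 * θ * ((n : ℝ) + k + 1))) = x ^ k * (1 / (1 - x) ^ (k + 1) - 1) := by
    intro k
    have h := hasSum_choose_mul_geometric_of_norm_lt_one (𝕜 := ℝ) k (r := x)
      (by rw [Real.norm_of_nonneg hx0.le]; exact hx1)
    have h' := ((hasSum_nat_add_iff' 1).mpr h).mul_left (x ^ k)
    simp only [Finset.sum_range_one, zero_add, Nat.choose_self, Nat.cast_one, pow_zero, mul_one]
      at h'
    rw [← h'.tsum_eq]
    congr 1
    ext n
    have : g ^ (-2 * θ * ((n : ℝ) + k + 1)) = x ^ (n + k + 1) := by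
      rw [hx, ← Real.rpow_natCast, ← Real.rpow_mul hg0.le]
      push_cast
      rfl
    rw [this, show n + 1 + k = n + k + 1 by ring]
    ring
  simp only [hS]
  have main := (limsup_log_bounds (fun k => x ^ k * (1 / (1 - x) ^ (k + 1) - 1))
    (1 / (1 - x) - 1) (1 / (1 - x)) x (x / (1 - x))
    (by rw [sub_pos, lt_div_iff₀ hy]; linarith) (by positivity) hx0 (by positivity)
    (by
      intro k
      rw [mul_comm]
      gcongr 
      exact pow_le_of_le_one hy.le (by linarith) (by omega))
    (by
      intro k
      have : 1 / (1 - x) * (x / (1 - x)) ^ k = x ^ k * (1 / (1 - x) ^ (k + 1)) := by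
        rw [div_pow, pow_succ]
        field_simp
      rw [this]
      gcongr
      linarith)).2
  refine main.trans ?_
  rw [Real.log_div hx0.ne' hy.ne', hlx]
  have h1 : Real.log (1 - x)⁻¹ ≤ (1 - x)⁻¹ - 1 := Real.log_le_sub_one_of_pos (by positivity)
  rw [Real.log_inv] at h1
  have h2 : (1 - x)⁻¹ - 1 ≤ 1 / N := by
    have : (1 - x)⁻¹ - 1 = x / (1 - x) := by field_simp; ring
    rw [this, div_le_div_iff₀ hy (by linarith)]
    nlinarith
  linarith

/-- Admissible digit lists. -/
abbrev DL (k : ℕ) := {l : List ℕ // l.length = k ∧ ∀ a ∈ l, 1 ≤ a}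

def consEquiv (k : ℕ) : ℕ × DL k ≃ DL (k + 1) where
  toFun p := ⟨(p.1 + 1) :: p.2.1, by simp [p.2.2.1], by
    intro a ha
    rcases List.mem_cons.1 ha with h | h
    · omega
    · exact p.2.2.2 a h⟩
  invFun l := ⟨l.1.headD 0 - 1, ⟨l.1.tail, by simp [l.2.1], fun a ha =>
    l.2.2 a (List.mem_of_mem_tail ha)⟩⟩
  left_inv p := by simp
  right_inv l := by
    obtain ⟨l, hl, h⟩ := l
    cases l with
    | nil => simp at hl
    | cons a t =>
      have : 1 ≤ a := h a (by simp)
      simp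
      omega

lemma hasSum_lists (h : ℕ → ℝ) (hpos : ∀ a, 0 ≤ h a) (H : ℝ)
    (hs : HasSum (fun m => h (m + 1)) H) (k : ℕ) :
    HasSum (fun l : DL k => (l.1.map h).prod) (H ^ k) := by
  induction k with
  | zero =>
    have hu : ∀ l : DL 0, l = ⟨[], by simp⟩ := by
      rintro ⟨l, hl, h⟩
      exact Subtype.ext (List.length_eq_zero_iff.1 hl)
    have := hasSum_single (f := fun l : DL 0 => (l.1.map h).prod) ⟨[], by simp⟩
      (fun l hl => absurd (hu l) hl)
    simpa using this
  | succ k ih =>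
    rw [← (consEquiv k).hasSum_iff]
    have hp : ∀ l : DL k, 0 ≤ (l.1.map h).prod := by
      intro l
      apply List.prod_nonneg
      intro a ha
      obtain ⟨b, _, rfl⟩ := List.mem_map.1 ha
      exact hpos b
    have hsum := hs.summable.mul_of_nonneg ih.summable (fun m => hpos _) hp
    have := hs.mul ih hsum
    rw [pow_succ, mul_comm]
    refine this.congr_fun ?_
    intro p
    simp [consEquiv]

lemma cfDen_tail_le (a : ℕ) (ha : 1 ≤ a) (t : List ℕ) : cfDen t ≤ cfDen (a :: t) := by
  cases t with
  | nil => simpa [cfDen] using ha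
  | cons b t =>
    rw [cfDen]
    nlinarith [Nat.zero_le (cfDen (b :: t))]

lemma cfDen_phi (g : ℝ) (hg1 : 1 < g) (hg : g ^ 2 = g + 1) (l : List ℕ)
    (hl : ∀ a ∈ l, 1 ≤ a) :
    ∀ a : ℕ, 1 ≤ a →
    ((a :: l).map (fun a : ℕ => g + ((a : ℝ) - 1) / g)).prod ≤
      cfDen (a :: l) + cfDen l / g := by
  have hg0 : 0 < g := by linarith
  induction l with
  | nil =>
    intro a ha
    have ha' : (1 : ℝ) ≤ a := by exact_mod_cast ha
    simp only [List.map_cons, List.map_nil, List.prod_cons, List.prod_nil, mul_one, cfDen]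
    have : g = 1 + 1 / g := by field_simp; linarith
    have h2 : ((a : ℝ) - 1) / g ≤ a - 1 := div_le_self (by linarith) hg1.le
    push_cast
    linarith
  | cons b t ih =>
    intro a ha
    have ha' : (1 : ℝ) ≤ a := by exact_mod_cast ha
    have hb := hl b (by simp)
    have ih' := ih (fun c hc => hl c (by simp [hc])) b hb
    rw [List.map_cons, List.prod_cons]
    have hr : (cfDen t : ℝ) ≤ cfDen (b :: t) := by exact_mod_cast cfDen_tail_le b hb t
    have hr0 : (0 : ℝ) ≤ cfDen t := by positivity
    have h0 : 0 ≤ g + ((a : ℝ) - 1) / g := by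
      have : 0 ≤ ((a : ℝ) - 1) / g := div_nonneg (by linarith) hg0.le
      linarith
    refine (mul_le_mul_of_nonneg_left ih' h0).trans ?_
    rw [show cfDen (a :: b :: t) = a * cfDen (b :: t) + cfDen t from rfl]
    push_cast
    generalize (cfDen (b :: t) : ℝ) = p at *
    generalize (cfDen t : ℝ) = r at *
    have e : (a * p + r + p / g) - (g + ((a : ℝ) - 1) / g) * (p + r / g)
        = (a - 1) * ((p - r) / g ^ 2) := by
      have h3 : g ^ 3 = 2 * g + 1 := by nlinarith
      field_simp
      ring_nf
      simp only [h3, hg]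
      ring
    have : 0 ≤ ((a : ℝ) - 1) * ((p - r) / g ^ 2) :=
      mul_nonneg (by linarith) (div_nonneg (by linarith) (by positivity))
    linarith

lemma cfDen_lower (g : ℝ) (hg1 : 1 < g) (hg : g ^ 2 = g + 1) (l : List ℕ)
    (hl : ∀ a ∈ l, 1 ≤ a) :
    g⁻¹ * (l.map (fun a : ℕ => g + ((a : ℝ) - 1) / g)).prod ≤ cfDen l := by
  have hg0 : 0 < g := by linarith
  cases l with
  | nil => simpa [cfDen] using inv_le_one_of_one_le₀ hg1.le
  | cons a t =>
    have ha := hl a (by simp)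
    have h := cfDen_phi g hg1 hg t (fun c hc => hl c (by simp [hc])) a ha
    have hr : (cfDen t : ℝ) ≤ cfDen (a :: t) := by exact_mod_cast cfDen_tail_le a ha t
    rw [inv_mul_le_iff₀ hg0]
    refine h.trans ?_
    have e : g * (cfDen (a :: t) : ℝ) = cfDen (a :: t) + cfDen (a :: t) / g := by
      field_simp
      rw [hg]; ring
    rw [e]
    gcongr

lemma cfDen_ones (g : ℝ) (hg1 : 1 < g) (hg : g ^ 2 = g + 1) (k : ℕ) :
    1 ≤ cfDen (List.replicate k 1) ∧ (cfDen (List.replicate k 1) : ℝ) ≤ g ^ k := by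
  induction k using Nat.twoStepInduction with
  | zero => simp [cfDen]
  | one => simpa [cfDen] using hg1.le
  | more k h1 h2 =>
    have e : cfDen (List.replicate (k + 2) 1) =
        cfDen (List.replicate (k + 1) 1) + cfDen (List.replicate k 1) := by
      simp [List.replicate_succ, cfDen]
    rw [e]
    refine ⟨by omega, ?_⟩
    push_cast
    have : g ^ (k + 2) = g ^ (k + 1) + g ^ k := by rw [pow_add, hg]; ring
    linarith [h1.2, h2.2]

/-- The one-letter sum. -/
noncomputable def letterSum (g θ : ℝ) : ℝ := ∑' m : ℕ, (1 + (m : ℝ) / g ^ 2) ^ (-2 * θ)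

lemma letter_base (g : ℝ) (hg1 : 1 < g) (m : ℕ) : 1 ≤ 1 + (m : ℝ) / g ^ 2 := by
  have : 0 ≤ (m : ℝ) / g ^ 2 := by positivity
  linarith

lemma letter_summable_one (g : ℝ) (hg1 : 1 < g) :
    Summable (fun m : ℕ => (1 + (m : ℝ) / g ^ 2) ^ (-2 * (1 : ℝ))) := by
  have hg0 : 0 < g := by linarith
  have h : Summable (fun m : ℕ => g ^ 4 * (1 / ((m + 1 : ℕ) : ℝ) ^ 2)) :=
    ((summable_nat_add_iff 1).2 (Real.summable_one_div_nat_pow.2 (by norm_num))).mul_left _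
  refine h.of_nonneg_of_le (fun m => Real.rpow_nonneg (by linarith [letter_base g hg1 m]) _) ?_
  intro m
  have hb := letter_base g hg1 m
  rw [show (-2 * (1 : ℝ)) = -((2 : ℕ) : ℝ) by norm_num, Real.rpow_neg (by linarith),
    Real.rpow_natCast]
  have h1 : (((m + 1 : ℕ) : ℝ) / g ^ 2) ≤ 1 + (m : ℝ) / g ^ 2 := by
    push_cast
    rw [add_div]
    have : 1 / g ^ 2 ≤ 1 := by
      rw [div_le_one (by positivity)]
      nlinarith
    linarith
  have h2 : g ^ 4 * (1 / ((m + 1 : ℕ) : ℝ) ^ 2) = ((((m + 1 : ℕ) : ℝ) / g ^ 2) ^ 2)⁻¹ := by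
    field_simp
  rw [h2]
  gcongr

lemma letter_le (g : ℝ) (hg1 : 1 < g) (θ : ℝ) (hθ : 1 ≤ θ) (m : ℕ) :
    (1 + (m : ℝ) / g ^ 2) ^ (-2 * θ) ≤ (1 + (m : ℝ) / g ^ 2) ^ (-2 * (1 : ℝ)) :=
  Real.rpow_le_rpow_of_exponent_le (letter_base g hg1 m) (by linarith)

lemma letter_summable (g : ℝ) (hg1 : 1 < g) (θ : ℝ) (hθ : 1 ≤ θ) :
    Summable (fun m : ℕ => (1 + (m : ℝ) / g ^ 2) ^ (-2 * θ)) :=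
  (letter_summable_one g hg1).of_nonneg_of_le
    (fun m => Real.rpow_nonneg (by linarith [letter_base g hg1 m]) _) (letter_le g hg1 θ hθ)

lemma letterSum_tendsto (g : ℝ) (hg1 : 1 < g) :
    Tendsto (fun θ => letterSum g θ) atTop (nhds 1) := by
  have h := tendsto_tsum_of_dominated_convergence (𝓕 := (atTop : Filter ℝ))
    (f := fun (θ : ℝ) (m : ℕ) => (1 + (m : ℝ) / g ^ 2) ^ (-2 * θ))
    (g := fun m : ℕ => if m = 0 then (1 : ℝ) else 0)
    (letter_summable_one g hg1) ?_ ?_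
  · simpa [letterSum] using h
  · intro m
    by_cases hm : m = 0
    · simp [hm]
    · rw [if_neg hm]
      have hb : 1 < 1 + (m : ℝ) / g ^ 2 := by
        have : 0 < (m : ℝ) / g ^ 2 := by
          have : 0 < m := Nat.pos_of_ne_zero hm
          positivity
        linarith
      have e : ∀ θ : ℝ, (1 + (m : ℝ) / g ^ 2) ^ (-2 * θ) =
          Real.exp (-(2 * Real.log (1 + (m : ℝ) / g ^ 2) * θ)) := by
        intro θ
        rw [Real.rpow_def_of_pos (by linarith)]
        congr 1
        ring
      simp only [e]
      refine Real.tendsto_exp_neg_atTop_nhds_zero.comp ?_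
      exact tendsto_id.const_mul_atTop (by have := Real.log_pos hb; positivity)
  · filter_upwards [eventually_ge_atTop 1] with θ hθ m
    rw [Real.norm_of_nonneg (Real.rpow_nonneg (by linarith [letter_base g hg1 m]) _)]
    exact letter_le g hg1 θ hθ m

lemma list_prod_rpow (f : ℕ → ℝ) (s : ℝ) (l : List ℕ) (hf : ∀ a ∈ l, 0 < f a) :
    0 < (l.map f).prod ∧ (l.map f).prod ^ s = (l.map (fun a => f a ^ s)).prod := by
  induction l with
  | nil => simp
  | cons a t ih =>
    have ha := hf a (by simp)
    have ih' := ih (fun b hb => hf b (by simp [hb]))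
    simp only [List.map_cons, List.prod_cons]
    exact ⟨mul_pos ha ih'.1, by rw [Real.mul_rpow ha.le ih'.1.le, ih'.2]⟩

lemma pressure_bounds (g : ℝ) (hg1 : 1 < g) (hg : g ^ 2 = g + 1) (θ : ℝ) (hθ : 1 ≤ θ) :
    -2 * θ * Real.log g ≤ diophantinePressure θ ∧
      diophantinePressure θ ≤ -2 * θ * Real.log g + Real.log (letterSum g θ) := by
  have hg0 : 0 < g := by linarith
  have hsum := letter_summable g hg1 θ hθ
  have hx0 : 0 < g ^ (-2 * θ) := Real.rpow_pos_of_pos hg0 _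
  have hW : 1 ≤ letterSum g θ := by
    have := hsum.le_tsum 0 (fun m _ => Real.rpow_nonneg (by linarith [letter_base g hg1 m]) _)
    simpa [letterSum] using this
  let h : ℕ → ℝ := fun a => |g + ((a : ℝ) - 1) / g| ^ (-2 * θ)
  have hh : HasSum (fun m => h (m + 1)) (g ^ (-2 * θ) * letterSum g θ) := by
    refine (hsum.hasSum.mul_left (g ^ (-2 * θ))).congr_fun ?_
    intro m
    have hb := letter_base g hg1 m
    rw [← Real.mul_rpow hg0.le (by linarith)]
    have e : g + (((m + 1 : ℕ) : ℝ) - 1) / g = g * (1 + (m : ℝ) / g ^ 2) := by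
      push_cast
      field_simp
      ring
    simp only [h, e]
    rw [abs_of_nonneg (mul_nonneg hg0.le (by linarith))]
  have hl := hasSum_lists h (fun a => Real.rpow_nonneg (abs_nonneg _) _) _ hh
  have term : ∀ (k : ℕ) (l : DL k), (cfDen l.1 : ℝ) ^ (-2 * θ) ≤
      (g⁻¹) ^ (-2 * θ) * (l.1.map h).prod := by
    intro k l
    have hpos : ∀ a ∈ l.1, 0 < g + ((a : ℝ) - 1) / g := by
      intro a ha
      have : (1 : ℝ) ≤ a := by exact_mod_cast l.2.2 a ha
      have : 0 ≤ ((a : ℝ) - 1) / g := div_nonneg (by linarith) hg0.le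
      linarith
    have e1 := list_prod_rpow (fun a : ℕ => g + ((a : ℝ) - 1) / g) (-2 * θ) l.1 hpos
    have e2 : l.1.map h = l.1.map (fun a : ℕ => (g + ((a : ℝ) - 1) / g) ^ (-2 * θ)) := by
      apply List.map_congr_left
      intro a ha
      simp only [h]
      rw [abs_of_pos (hpos a ha)]
    rw [e2, ← e1.2, ← Real.mul_rpow (by positivity) e1.1.le]
    exact Real.rpow_le_rpow_of_nonpos (mul_pos (by positivity) e1.1)
      (cfDen_lower g hg1 hg l.1 l.2.2) (by linarith)
  have hnn : ∀ (k : ℕ) (l : DL k), 0 ≤ (cfDen l.1 : ℝ) ^ (-2 * θ) :=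
    fun k l => Real.rpow_nonneg (by positivity) _
  have hsm : ∀ k : ℕ, Summable (fun l : DL k => (cfDen l.1 : ℝ) ^ (-2 * θ)) := fun k =>
    ((hl k).summable.mul_left ((g⁻¹) ^ (-2 * θ))).of_nonneg_of_le (hnn k) (term k)
  have main := limsup_log_bounds
    (fun k => ∑' l : DL k, (cfDen l.1 : ℝ) ^ (-2 * θ)) 1 ((g⁻¹) ^ (-2 * θ))
    (g ^ (-2 * θ)) (g ^ (-2 * θ) * letterSum g θ) one_pos
    (Real.rpow_pos_of_pos (by positivity) _) hx0 (mul_pos hx0 (by linarith))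
    (by
      intro k
      have hk := cfDen_ones g hg1 hg k
      have h1 := (hsm k).le_tsum ⟨List.replicate k 1, by simp, by
        intro a ha
        exact (List.eq_of_mem_replicate ha).ge⟩ (fun l _ => hnn k l)
      refine le_trans ?_ h1
      have h2 : (0 : ℝ) < cfDen (List.replicate k 1) := by exact_mod_cast hk.1
      have h3 := Real.rpow_le_rpow_of_nonpos h2 hk.2 (show -2 * θ ≤ 0 by linarith)
      refine le_trans (le_of_eq ?_) h3
      rw [one_mul, ← Real.rpow_natCast, ← Real.rpow_natCast, ← Real.rpow_mul hg0.le,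
        ← Real.rpow_mul hg0.le, mul_comm])
    (by
      intro k
      rw [← ((hl k).mul_left ((g⁻¹) ^ (-2 * θ))).tsum_eq]
      exact (hsm k).tsum_le_tsum (term k) ((hl k).summable.mul_left _))
  rw [Real.log_mul hx0.ne' (by linarith), Real.log_rpow hg0] at main
  exact main

/-- For `N ≥ 1` and `θ > (1 + log N)/(2 log γ)`,
`limsup_k (1/k) log ∑_{n=k+1}^∞ C(n,k) γ^{-2θn} ≤ -2θ log γ + 1/N`; consequently
`lim_{θ→∞} |P_D(θ) + 2θ log γ| = 0`. -/
theorem diophantine_pressure_asymptotics :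
    (∀ N : ℕ, 1 ≤ N → ∀ θ : ℝ,
      (1 + Real.log N) / (2 * Real.log ((1 + Real.sqrt 5) / 2)) < θ →
      limsup (fun k : ℕ =>
          Real.log (∑' n : ℕ, (((n + k + 1).choose k : ℝ)) *
            ((1 + Real.sqrt 5) / 2) ^ (-2 * θ * ((n : ℝ) + k + 1))) / k) atTop ≤
        -2 * θ * Real.log ((1 + Real.sqrt 5) / 2) + 1 / N) ∧
    Tendsto (fun θ : ℝ =>
        |diophantinePressure θ + 2 * θ * Real.log ((1 + Real.sqrt 5) / 2)|)
      atTop (nhds 0) := by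
  have hg1 : (1 : ℝ) < (1 + Real.sqrt 5) / 2 := Real.one_lt_goldenRatio
  have hg : ((1 + Real.sqrt 5) / 2) ^ 2 = (1 + Real.sqrt 5) / 2 + 1 := Real.goldenRatio_sq
  generalize (1 + Real.sqrt 5) / 2 = g at hg1 hg ⊢
  refine ⟨fun N hN θ hθ => part_one g hg1 N hN θ hθ, ?_⟩
  have hlog : Tendsto (fun θ => Real.log (letterSum g θ)) atTop (nhds 0) := by
    have := (letterSum_tendsto g hg1).log one_ne_zero
    simpa using this
  refine squeeze_zero' (Eventually.of_forall fun θ => abs_nonneg _) ?_ hlog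
  filter_upwards [eventually_ge_atTop 1] with θ hθ
  obtain ⟨h1, h2⟩ := pressure_bounds g hg1 hg θ hθ
  rw [abs_of_nonneg (by linarith)]
  linarith
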